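/- arXiv:2308.04130 — 2 statements merged into one kernel-verified Lean document; each statement's English description precedes it below -/
import Mathlib

section
/- Let c be in the Tehranchi space 𝕔 and twice continuously differentiable on (0, ∞). Then for every fixed m ≥ 0, the map k ↦ (𝕋_k c)(m) = c(k + c(k)·m)/c(k) is nondecreasing on the set {k ≥ 0 : c(k) > 0}: for all 0 ≤ k₁ ≤ k₂ with c(k₂) > 0, it holds that c(k₁ + c(k₁)·m)/c(k₁) ≤ c(k₂ + c(k₂)·m)/c(k₂). -/
/-- The Tehranchi space: convex functions `c` with `(1 - m)₊ ≤ c m ≤ 1` for `m ≥ 0`. -/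
def TehranchiSpace (c : ℝ → ℝ) : Prop :=
  ConvexOn ℝ (Set.Ici 0) c ∧ ∀ m : ℝ, 0 ≤ m → max (1 - m) 0 ≤ c m ∧ c m ≤ 1

/-!
Write `yᵢ = kᵢ + c kᵢ * m` for `k₁ ≤ k₂`. If `y₂ ≤ y₁`, antitonicity of `c` already gives
`c y₁ / c k₁ ≤ c y₂ / c k₂`. Otherwise let `q` be the slope of the chord of `c` over `[k₁, k₂]`.
Convexity bounds from below by `q` the slopes over `[k₂, y₂]` and `[y₁, y₂]`, whose lengths are
`c k₂ * m` and `(k₂ - k₁) * (1 + q * m)`, so that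
`c k₂ * (1 + q * m) ≤ c y₂` and `c y₁ - c y₂ ≤ (c k₁ - c k₂) * (1 + q * m)`.
As `c k₂ ≤ c k₁`, eliminating `1 + q * m` yields `c y₁ * c k₂ ≤ c y₂ * c k₁`.
-/

section Convex

variable {𝕜 : Type*} [Field 𝕜] [LinearOrder 𝕜] [IsStrictOrderedRing 𝕜] {s : Set 𝕜} {f : 𝕜 → 𝕜}

theorem slope_le_slope_of_convexOn (hf : ConvexOn 𝕜 s f) {x₁ x₂ y₁ y₂ : 𝕜} (hx₁ : x₁ ∈ s)
    (hx₂ : x₂ ∈ s) (hy₁ : y₁ ∈ s) (hy₂ : y₂ ∈ s) (hx : x₁ < x₂) (hy : y₁ < y₂)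
    (h₁ : x₁ ≤ y₁) (h₂ : x₂ ≤ y₂) : slope f x₁ x₂ ≤ slope f y₁ y₂ :=
  have hxy : x₁ < y₂ := h₁.trans_lt hy
  calc
    slope f x₁ x₂ ≤ slope f x₁ y₂ := hf.slope_mono hx₁ ⟨hx₂, hx.ne'⟩ ⟨hy₂, hxy.ne'⟩ h₂
    _ = slope f y₂ x₁ := slope_comm f x₁ y₂
    _ ≤ slope f y₂ y₁ := hf.slope_mono hy₂ ⟨hx₁, hxy.ne⟩ ⟨hy₁, hy.ne⟩ h₁
    _ = slope f y₁ y₂ := slope_comm f y₂ y₁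

theorem sub_mul_slope_le_sub_of_convexOn (hf : ConvexOn 𝕜 s f) {x₁ x₂ y₁ y₂ : 𝕜} (hx₁ : x₁ ∈ s)
    (hx₂ : x₂ ∈ s) (hy₁ : y₁ ∈ s) (hy₂ : y₂ ∈ s) (hx : x₁ < x₂) (hy : y₁ ≤ y₂)
    (h₁ : x₁ ≤ y₁) (h₂ : x₂ ≤ y₂) : (y₂ - y₁) * slope f x₁ x₂ ≤ f y₂ - f y₁ := by
  rcases hy.eq_or_lt with rfl | hlt
  · simp
  calc
    (y₂ - y₁) * slope f x₁ x₂ ≤ (y₂ - y₁) * slope f y₁ y₂ :=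
      mul_le_mul_of_nonneg_left
        (slope_le_slope_of_convexOn hf hx₁ hx₂ hy₁ hy₂ hx hlt h₁ h₂) (sub_nonneg.2 hy)
    _ = f y₂ - f y₁ := sub_smul_slope f y₁ y₂

theorem antitoneOn_of_convexOn_of_bddAbove (hs : IsUpperSet s) (hf : ConvexOn 𝕜 s f)
    (hbdd : BddAbove (f '' s)) : AntitoneOn f s := by
  intro x hx y hy hxy
  by_contra! hlt
  obtain ⟨B, hB⟩ := hbdd
  have hfB : ∀ z ∈ s, f z ≤ B := fun z hz ↦ hB (Set.mem_image_of_mem f hz)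
  have hxy' : x < y := hxy.lt_of_ne (by rintro rfl; exact hlt.false)
  have hslope : 0 < slope f x y := (slope_pos_iff_of_le hxy).2 hlt
  -- At `z` the line through `(x, f x)` and `(y, f y)` has height `B + 1`.
  set z := y + (B + 1 - f y) / slope f x y with hz
  have hyz : y ≤ z := le_add_of_nonneg_right (div_nonneg (by linarith [hfB y hy]) hslope.le)
  have hzs : z ∈ s := hs hyz hy
  have hchord : (z - y) * slope f x y ≤ f z - f y :=
    sub_mul_slope_le_sub_of_convexOn hf hx hy hy hzs hxy' hyz hxy hyz
  rw [hz, add_sub_cancel_left, div_mul_cancel₀ _ hslope.ne', ← hz] at hchord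
  linarith [hfB z hzs]

end Convex

namespace TehranchiSpace

variable {c : ℝ → ℝ}

theorem nonneg (hc : TehranchiSpace c) {x : ℝ} (hx : 0 ≤ x) : 0 ≤ c x :=
  (le_max_right _ _).trans (hc.2 x hx).1

theorem antitoneOn (hc : TehranchiSpace c) : AntitoneOn c (Set.Ici 0) :=
  antitoneOn_of_convexOn_of_bddAbove (isUpperSet_Ici 0) hc.1
    ⟨1, Set.forall_mem_image.2 fun x hx ↦ (hc.2 x hx).2⟩

end TehranchiSpace

section Transform

variable {𝕜 : Type*} [Field 𝕜]

/-- The value at `m` of the transform `𝕋_k c`, the family whose monotonicity in `k` is studied.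
It is defined for every `k`; where `c k = 0`, division by zero makes it the zero function. -/
def tehranchiTransform (c : 𝕜 → 𝕜) (k m : 𝕜) : 𝕜 :=
  c (k + c k * m) / c k

variable [LinearOrder 𝕜] [IsStrictOrderedRing 𝕜] {s : Set 𝕜} {c : 𝕜 → 𝕜} {k₁ k₂ m : 𝕜}

theorem tehranchiTransform_le_of_le (hs : IsUpperSet s) (hanti : AntitoneOn c s)
    (hnonneg : ∀ x ∈ s, 0 ≤ c x) (hm : 0 ≤ m) (hk₁ : k₁ ∈ s) (hk : k₁ ≤ k₂) (hpos : 0 < c k₂)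
    (hy : k₂ + c k₂ * m ≤ k₁ + c k₁ * m) :
    tehranchiTransform c k₁ m ≤ tehranchiTransform c k₂ m := by
  have hk₂ : k₂ ∈ s := hs hk hk₁
  have hy₂ : k₂ + c k₂ * m ∈ s := hs (le_add_of_nonneg_right (by positivity)) hk₂
  exact div_le_div₀ (hnonneg _ hy₂) (hanti hy₂ (hs hy hy₂) hy) hpos (hanti hk₁ hk₂ hk)

theorem tehranchiTransform_le_of_lt (hs : IsUpperSet s) (hc : ConvexOn 𝕜 s c) (hm : 0 ≤ m)
    (hk₁ : k₁ ∈ s) (hk : k₁ < k₂) (hpos : 0 < c k₂) (hck : c k₂ ≤ c k₁)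
    (hy : k₁ + c k₁ * m < k₂ + c k₂ * m) :
    tehranchiTransform c k₁ m ≤ tehranchiTransform c k₂ m := by
  have hpos₁ : 0 < c k₁ := hpos.trans_le hck
  rw [tehranchiTransform, tehranchiTransform, div_le_div_iff₀ hpos₁ hpos]
  set y₁ := k₁ + c k₁ * m with hy₁_def
  set y₂ := k₂ + c k₂ * m with hy₂_def
  set q := slope c k₁ k₂
  have hky₁ : k₁ ≤ y₁ := le_add_of_nonneg_right (by positivity)
  have hky₂ : k₂ ≤ y₂ := le_add_of_nonneg_right (by positivity)
  have hk₂ : k₂ ∈ s := hs hk.le hk₁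
  have hy₁ : y₁ ∈ s := hs hky₁ hk₁
  have hy₂ : y₂ ∈ s := hs hky₂ hk₂
  have hq : (k₂ - k₁) * q = c k₂ - c k₁ := sub_smul_slope c k₁ k₂
  have hlower : c k₂ * (1 + q * m) ≤ c y₂ := by
    have hchord : (y₂ - k₂) * q ≤ c y₂ - c k₂ :=
      sub_mul_slope_le_sub_of_convexOn hc hk₁ hk₂ hk₂ hy₂ hk hky₂ hk.le hky₂
    rw [hy₂_def, add_sub_cancel_left, ← hy₂_def] at hchord
    linarith
  have hdrop : c y₁ - c y₂ ≤ (c k₁ - c k₂) * (1 + q * m) := by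
    have hchord : (y₂ - y₁) * q ≤ c y₂ - c y₁ :=
      sub_mul_slope_le_sub_of_convexOn hc hk₁ hk₂ hy₁ hy₂ hk hy.le hky₁ hky₂
    have hgap : (y₂ - y₁) * q = (c k₂ - c k₁) * (1 + q * m) := by
      linear_combination q * hy₂_def - q * hy₁_def + hq
    rw [hgap] at hchord
    linarith
  calc
    c y₁ * c k₂ = (c y₁ - c y₂) * c k₂ + c y₂ * c k₂ := by ring
    _ ≤ (c k₁ - c k₂) * (1 + q * m) * c k₂ + c y₂ * c k₂ := by gcongr
    _ = (c k₁ - c k₂) * (c k₂ * (1 + q * m)) + c y₂ * c k₂ := by ring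
    _ ≤ (c k₁ - c k₂) * c y₂ + c y₂ * c k₂ := by gcongr
    _ = c y₂ * c k₁ := by ring

theorem Tk_monotone_in_k_general (hs : IsUpperSet s) (hc : ConvexOn 𝕜 s c)
    (hanti : AntitoneOn c s) (hnonneg : ∀ x ∈ s, 0 ≤ c x) (hm : 0 ≤ m) :
    MonotoneOn (fun k ↦ tehranchiTransform c k m) {k ∈ s | 0 < c k} := by
  rintro k₁ ⟨hk₁, -⟩ k₂ ⟨hk₂, hpos⟩ hk
  rcases hk.eq_or_lt with rfl | hlt
  · exact le_rfl
  rcases le_or_gt (k₂ + c k₂ * m) (k₁ + c k₁ * m) with hy | hy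
  · exact tehranchiTransform_le_of_le hs hanti hnonneg hm hk₁ hk hpos hy
  · exact tehranchiTransform_le_of_lt hs hc hm hk₁ hlt hpos (hanti hk₁ hk₂ hk) hy

end Transform

/-- For `c` in the Tehranchi space and twice continuously differentiable on `(0, ∞)`,
the map `k ↦ (𝕋_k c)(m) = c (k + c k · m) / c k` is nondecreasing in `k` on the set
where `c k > 0`. -/
theorem Tk_monotone_in_k (c : ℝ → ℝ) (hc : TehranchiSpace c)
    (hc2 : ContDiffOn ℝ 2 c (Set.Ioi 0)) (m : ℝ) (hm : 0 ≤ m) :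
    ∀ k₁ k₂ : ℝ, 0 ≤ k₁ → k₁ ≤ k₂ → 0 < c k₂ →
      c (k₁ + c k₁ * m) / c k₁ ≤ c (k₂ + c k₂ * m) / c k₂ := fun _ _ hk₁ hk hpos ↦
  have hk₂ := hk₁.trans hk
  Tk_monotone_in_k_general (isUpperSet_Ici 0) hc.1 hc.antitoneOn (fun _ ↦ hc.nonneg) hm
    ⟨hk₁, hpos.trans_le (hc.antitoneOn hk₁ hk₂ hk)⟩ ⟨hk₂, hpos⟩ hk
end

section
/- Let v > 0 and a > 0, and define δ(r) := (φ(r - v)/φ(r))·Φ(r) - Φ(r - v) for r ∈ ℝ. Then there exists a unique r* ∈ ℝ with δ(r*) = a, and: (i) if a ≤ √(π/2)·φ(v) + Φ(v) - 1, then -√(-2·log((a/v)·√(2π))) < r* ≤ 0; (ii) if √(π/2)·φ(v) + Φ(v) - 1 < a ≤ (1/√(2π))·(Φ(v)/φ(v)) - 1/2, then 0 < r* ≤ v; (iii) if a > (1/√(2π))·(Φ(v)/φ(v)) - 1/2, then v < r* < (1/2)·(v + (2/v)·log(2a + 1)). -/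
open MeasureTheory

/-- The standard normal probability density function. -/
noncomputable def phi (x : ℝ) : ℝ := Real.exp (-x ^ 2 / 2) / Real.sqrt (2 * Real.pi)

/-- The standard normal cumulative distribution function. -/
noncomputable def Phi (x : ℝ) : ℝ := ∫ t in Set.Iic x, phi t

/-- `δ(r) = (φ(r - v)/φ(r))·Φ(r) - Φ(r - v)` in the Black-Scholes case. -/
noncomputable def deltaBS (v r : ℝ) : ℝ := phi (r - v) / phi r * Phi r - Phi (r - v)

/-!
Everything rests on the Mills ratio `M = Φ / φ`, in terms of which
`δ(r) = φ(r - v) * (M(r) - M(r - v))`. From `φ'(x) = -x φ(x)` one gets `M'(x) = 1 + x M(x)`, and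
hence `δ'(r) = v φ(r - v) M(r) > 0`: `δ` increases from `0` to `∞`, and comparing `a = δ(r*)` with
`δ(0)` and `δ(v)` locates `r*` relative to `0` and `v`. On the negative axis `M' < 1`, so the mean
value theorem bounds `δ(r)` by `v φ(r)`, which gives the lower bound on `r*`. The upper bound comes
from `δ(r) = E Φ(r) - Φ(r - v) > (E - 1) Φ(r)` with `E = exp(v (r - v / 2))`, where
`Φ(r) > 1 / 2` for `r > 0`.
-/

open Set Filter Topology ProbabilityTheory

section General

variable {α β E : Type*}

lemma lt_of_strictMono_of_tendsto_atBot [PartialOrder α] [IsCodirectedOrder α] [NoMinOrder α]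
    [Preorder β] [TopologicalSpace β] [OrderClosedTopology β] {f : α → β} {b : β}
    (hf : StrictMono f) (hb : Tendsto f atBot (𝓝 b)) (x : α) : b < f x := by
  obtain ⟨y, hyx⟩ := exists_lt x
  exact (hf.monotone.le_of_tendsto hb y).trans_lt (hf hyx)

lemma range_eq_Ioi_of_strictMono_of_tendsto [LinearOrder α] [NoMinOrder α] [Nonempty α]
    [TopologicalSpace α] [PreconnectedSpace α]
    [LinearOrder β] [TopologicalSpace β] [OrderClosedTopology β] {f : α → β} {b : β}
    (hf : StrictMono f) (hc : Continuous f) (hbot : Tendsto f atBot (𝓝 b))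
    (htop : Tendsto f atTop atTop) : range f = Ioi b := by
  refine Subset.antisymm ?_ ?_
  · rintro _ ⟨x, rfl⟩
    exact lt_of_strictMono_of_tendsto_atBot hf hbot x
  · rw [← image_univ]
    exact isPreconnected_univ.intermediate_value_Ioi (by simp) (by simp) hc.continuousOn hbot htop

lemma hasDerivAt_integral_Iic [NormedAddCommGroup E] [NormedSpace ℝ E] [CompleteSpace E]
    {f : ℝ → E} {x : ℝ} (hf : Integrable f) (hc : ContinuousAt f x) :
    HasDerivAt (fun y ↦ ∫ t in Iic y, f t) (f x) x := by
  have hsplit : (fun y ↦ ∫ t in Iic y, f t) =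
      fun y ↦ (∫ t in Iic x, f t) + ∫ t in x..y, f t := by
    funext y
    rw [← intervalIntegral.integral_Iic_sub_Iic hf.integrableOn hf.integrableOn, add_sub_cancel]
  rw [hsplit]
  exact (intervalIntegral.integral_hasDerivAt_right hf.intervalIntegrable
    hf.aestronglyMeasurable.stronglyMeasurableAtFilter hc).const_add _

lemma integral_Iic_neg_of_even [NormedAddCommGroup E] [NormedSpace ℝ E] {f : ℝ → E}
    (hf : Function.Even f) (x : ℝ) : ∫ t in Iic (-x), f t = ∫ t in Ioi x, f t := by
  rw [← integral_comp_neg_Ioi]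
  simp only [hf _]

lemma abs_lt_sqrt_neg_two_mul_log {c x : ℝ} (hc : 0 < c) (h : c < Real.exp (-x ^ 2 / 2)) :
    |x| < √(-2 * Real.log c) := by
  have hlog : Real.log c < -x ^ 2 / 2 := (Real.log_lt_iff_lt_exp hc).2 h
  apply Real.lt_sqrt_of_sq_lt
  rw [sq_abs]
  linarith

end General

section Density

lemma phi_eq_gaussianPDFReal : phi = gaussianPDFReal 0 1 := by
  funext x
  simp [phi, gaussianPDFReal, div_eq_inv_mul]

lemma phi_pos (x : ℝ) : 0 < phi x := by
  rw [phi_eq_gaussianPDFReal]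
  exact gaussianPDFReal_pos 0 1 x one_ne_zero

lemma integrable_phi : Integrable phi := by
  rw [phi_eq_gaussianPDFReal]
  exact integrable_gaussianPDFReal 0 1

lemma integral_phi : ∫ x, phi x = 1 := by
  rw [phi_eq_gaussianPDFReal]
  exact integral_gaussianPDFReal_eq_one 0 one_ne_zero

lemma even_phi : Function.Even phi := fun x ↦ by simp only [phi, neg_sq]

lemma phi_le_phi_of_abs_le {x y : ℝ} (h : |x| ≤ |y|) : phi y ≤ phi x := by
  have hsq : x ^ 2 ≤ y ^ 2 := sq_le_sq.2 h
  unfold phi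
  gcongr

lemma phi_mul_sqrt_two_pi (x : ℝ) : phi x * √(2 * Real.pi) = Real.exp (-x ^ 2 / 2) :=
  div_mul_cancel₀ _ (by positivity)

lemma phi_zero : phi 0 = 1 / √(2 * Real.pi) := by simp [phi]

lemma phi_sub_div_phi (x v : ℝ) : phi (x - v) / phi x = Real.exp (v * (x - v / 2)) := by
  rw [phi, phi, div_div_div_cancel_right₀ (by positivity), ← Real.exp_sub]
  ring_nf

lemma hasDerivAt_phi (x : ℝ) : HasDerivAt phi (-x * phi x) x := by
  have hexponent : HasDerivAt (fun y : ℝ ↦ -y ^ 2 / 2) (-x) x :=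
    ((hasDerivAt_pow 2 x).fun_neg.div_const 2).congr_deriv (by push_cast; ring)
  refine (hexponent.exp.div_const _).congr_deriv ?_
  rw [phi]
  ring

end Density

section DistributionFunction

lemma hasDerivAt_Phi (x : ℝ) : HasDerivAt Phi (phi x) x :=
  hasDerivAt_integral_Iic integrable_phi (hasDerivAt_phi x).continuousAt

lemma strictMono_Phi : StrictMono Phi :=
  strictMono_of_hasDerivAt_pos hasDerivAt_Phi phi_pos

lemma Phi_eq_cdf : Phi = cdf (gaussianReal 0 1) := by
  funext x
  rw [cdf_eq_real, measureReal_def, gaussianReal_apply_eq_integral 0 one_ne_zero,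
    ENNReal.toReal_ofReal (integral_nonneg (gaussianPDFReal_nonneg 0 1)), Phi,
    phi_eq_gaussianPDFReal]

lemma tendsto_Phi_atBot : Tendsto Phi atBot (𝓝 0) := by
  rw [Phi_eq_cdf]
  exact tendsto_cdf_atBot _

lemma tendsto_Phi_atTop : Tendsto Phi atTop (𝓝 1) := by
  rw [Phi_eq_cdf]
  exact tendsto_cdf_atTop _

lemma Phi_pos (x : ℝ) : 0 < Phi x :=
  lt_of_strictMono_of_tendsto_atBot strictMono_Phi tendsto_Phi_atBot x

lemma Phi_neg (x : ℝ) : Phi (-x) = 1 - Phi x := by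
  rw [Phi, integral_Iic_neg_of_even even_phi, eq_sub_iff_add_eq', Phi,
    intervalIntegral.integral_Iic_add_Ioi integrable_phi.integrableOn integrable_phi.integrableOn,
    integral_phi]

lemma Phi_zero : Phi 0 = 1 / 2 := by
  have hsymm : Phi 0 = 1 - Phi 0 := by simpa only [neg_zero] using Phi_neg 0
  linarith

end DistributionFunction

section MillsRatio

/-- The Mills ratio `Φ / φ` of the lower tail of the standard normal distribution; the Mills ratio
of the upper tail, `(1 - Φ) / φ`, is its reflection `x ↦ millsRatio (-x)`. -/
noncomputable def millsRatio (x : ℝ) : ℝ := Phi x / phi x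

lemma millsRatio_pos (x : ℝ) : 0 < millsRatio x := div_pos (Phi_pos x) (phi_pos x)

lemma hasDerivAt_millsRatio (x : ℝ) : HasDerivAt millsRatio (1 + x * millsRatio x) x := by
  have hphi : phi x ≠ 0 := (phi_pos x).ne'
  refine ((hasDerivAt_Phi x).fun_div (hasDerivAt_phi x) hphi).congr_deriv ?_
  rw [millsRatio]
  field_simp
  ring

lemma millsRatio_sub_lt_sub {x y : ℝ} (hxy : x < y) (hy : y ≤ 0) :
    millsRatio y - millsRatio x < y - x := by
  have hdiff : Differentiable ℝ millsRatio := fun z ↦ (hasDerivAt_millsRatio z).differentiableAt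
  have hderiv : ∀ z ∈ interior (Iic (0 : ℝ)), deriv millsRatio z < 1 := by
    intro z hz
    rw [interior_Iic] at hz
    rw [(hasDerivAt_millsRatio z).deriv]
    linarith [mul_neg_of_neg_of_pos hz (millsRatio_pos z)]
  simpa only [one_mul] using (convex_Iic (0 : ℝ)).image_sub_lt_mul_sub_of_deriv_lt
    hdiff.continuous.continuousOn hdiff.differentiableOn hderiv x (hxy.le.trans hy) y hy hxy

end MillsRatio

section Delta

variable {v a r : ℝ}

lemma deltaBS_eq_phi_mul_millsRatio_sub (v r : ℝ) :
    deltaBS v r = phi (r - v) * (millsRatio r - millsRatio (r - v)) := by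
  have hphi : phi (r - v) ≠ 0 := (phi_pos (r - v)).ne'
  rw [deltaBS, millsRatio, millsRatio, mul_sub, mul_div_cancel₀ _ hphi, div_mul_eq_mul_div,
    mul_div_assoc]

lemma deltaBS_eq_exp_mul_Phi_sub (v r : ℝ) :
    deltaBS v r = Real.exp (v * (r - v / 2)) * Phi r - Phi (r - v) := by
  rw [deltaBS, phi_sub_div_phi]

lemma deltaBS_zero (v : ℝ) : deltaBS v 0 = √(Real.pi / 2) * phi v + Phi v - 1 := by
  have hsqrt : √(2 * Real.pi) = 2 * √(Real.pi / 2) := by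
    rw [show 2 * Real.pi = 2 ^ 2 * (Real.pi / 2) by ring, Real.sqrt_mul (by norm_num),
      Real.sqrt_sq (by norm_num)]
  rw [deltaBS, zero_sub, even_phi, Phi_neg, Phi_zero, phi_zero, div_div_eq_mul_div, div_one, hsqrt]
  ring

lemma deltaBS_self (v : ℝ) :
    deltaBS v v = 1 / √(2 * Real.pi) * (Phi v / phi v) - 1 / 2 := by
  rw [deltaBS, sub_self, Phi_zero, phi_zero, div_mul_eq_mul_div, mul_div_assoc]

lemma hasDerivAt_deltaBS (v r : ℝ) :
    HasDerivAt (deltaBS v) (v * phi (r - v) * millsRatio r) r := by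
  have hfun : deltaBS v = fun s ↦ phi (s - v) * millsRatio s - Phi (s - v) := by
    funext s
    rw [deltaBS, millsRatio, div_mul_eq_mul_div, mul_div_assoc]
  rw [hfun]
  refine ((((hasDerivAt_phi (r - v)).comp_sub_const r v).fun_mul
    (hasDerivAt_millsRatio r)).fun_sub
      ((hasDerivAt_Phi (r - v)).comp_sub_const r v)).congr_deriv ?_
  ring

lemma strictMono_deltaBS (hv : 0 < v) : StrictMono (deltaBS v) :=
  strictMono_of_hasDerivAt_pos (hasDerivAt_deltaBS v) fun r ↦
    mul_pos (mul_pos hv (phi_pos (r - v))) (millsRatio_pos r)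

lemma tendsto_deltaBS_atBot (hv : 0 < v) : Tendsto (deltaBS v) atBot (𝓝 0) := by
  have hexponent : Tendsto (fun r ↦ v * (r - v / 2)) atBot atBot :=
    (tendsto_atBot_add_const_right _ (-(v / 2)) tendsto_id).const_mul_atBot hv
  have hlim := ((Real.tendsto_exp_atBot.comp hexponent).mul tendsto_Phi_atBot).sub
    (tendsto_Phi_atBot.comp (tendsto_atBot_add_const_right _ (-v) tendsto_id))
  rw [funext (deltaBS_eq_exp_mul_Phi_sub v)]
  simpa only [mul_zero, sub_zero] using! hlim

lemma tendsto_deltaBS_atTop (hv : 0 < v) : Tendsto (deltaBS v) atTop atTop := by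
  have hexponent : Tendsto (fun r ↦ v * (r - v / 2)) atTop atTop :=
    (tendsto_atTop_add_const_right _ (-(v / 2)) tendsto_id).const_mul_atTop hv
  rw [funext (deltaBS_eq_exp_mul_Phi_sub v)]
  exact ((Real.tendsto_exp_atTop.comp hexponent).atTop_mul_pos one_pos tendsto_Phi_atTop).atTop_add
    (tendsto_Phi_atTop.comp (tendsto_atTop_add_const_right _ (-v) tendsto_id)).neg

lemma range_deltaBS (hv : 0 < v) : range (deltaBS v) = Ioi 0 :=
  range_eq_Ioi_of_strictMono_of_tendsto (strictMono_deltaBS hv)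
    (continuous_iff_continuousAt.2 fun r ↦ (hasDerivAt_deltaBS v r).continuousAt)
    (tendsto_deltaBS_atBot hv) (tendsto_deltaBS_atTop hv)

lemma deltaBS_pos (hv : 0 < v) (r : ℝ) : 0 < deltaBS v r :=
  (range_deltaBS hv).subset (mem_range_self r)

lemma existsUnique_deltaBS_eq (hv : 0 < v) (ha : 0 < a) : ∃! r, deltaBS v r = a := by
  obtain ⟨r, hr⟩ : a ∈ range (deltaBS v) := (range_deltaBS hv).superset ha
  exact ⟨r, hr, fun s hs ↦ (strictMono_deltaBS hv).injective (hs.trans hr.symm)⟩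

lemma deltaBS_lt_mul_phi (hv : 0 < v) (hr : r ≤ 0) : deltaBS v r < v * phi r := by
  have hmills : millsRatio r - millsRatio (r - v) < v := by
    simpa only [sub_sub_cancel] using millsRatio_sub_lt_sub (sub_lt_self r hv) hr
  have hphi : phi (r - v) ≤ phi r :=
    phi_le_phi_of_abs_le (abs_le_abs_of_nonpos hr (sub_le_self r hv.le))
  calc deltaBS v r = phi (r - v) * (millsRatio r - millsRatio (r - v)) :=
        deltaBS_eq_phi_mul_millsRatio_sub v r
    _ < phi (r - v) * v := mul_lt_mul_of_pos_left hmills (phi_pos _)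
    _ ≤ phi r * v := mul_le_mul_of_nonneg_right hphi hv.le
    _ = v * phi r := mul_comm _ _

lemma neg_sqrt_log_deltaBS_lt (hv : 0 < v) (hr : r ≤ 0) :
    -√(-2 * Real.log (deltaBS v r / v * √(2 * Real.pi))) < r := by
  have hpos : 0 < deltaBS v r / v * √(2 * Real.pi) := by
    have := deltaBS_pos hv r
    positivity
  have hlt : deltaBS v r / v * √(2 * Real.pi) < Real.exp (-r ^ 2 / 2) := by
    rw [← phi_mul_sqrt_two_pi]
    gcongr
    exact (div_lt_iff₀' hv).2 (deltaBS_lt_mul_phi hv hr)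
  exact (abs_lt.1 (abs_lt_sqrt_neg_two_mul_log hpos hlt)).1

lemma exp_lt_two_mul_deltaBS_add_one (hv : 0 < v) (r : ℝ) :
    Real.exp (v * (r - v / 2)) < 2 * deltaBS v r + 1 := by
  rcases le_total r (v / 2) with hr | hr
  · have hexp : Real.exp (v * (r - v / 2)) ≤ 1 :=
      Real.exp_le_one_iff.2 (mul_nonpos_of_nonneg_of_nonpos hv.le (sub_nonpos.2 hr))
    linarith [deltaBS_pos hv r]
  · have hexp : 1 ≤ Real.exp (v * (r - v / 2)) :=
      Real.one_le_exp (mul_nonneg hv.le (sub_nonneg.2 hr))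
    have hhalf : 1 / 2 < Phi r := Phi_zero ▸ strictMono_Phi (by linarith)
    have hshift : Phi (r - v) < Phi r := strictMono_Phi (sub_lt_self r hv)
    have hdelta : (Real.exp (v * (r - v / 2)) - 1) * Phi r < deltaBS v r := by
      rw [deltaBS_eq_exp_mul_Phi_sub]
      linarith
    have hmul : (Real.exp (v * (r - v / 2)) - 1) * (1 / 2) ≤
        (Real.exp (v * (r - v / 2)) - 1) * Phi r :=
      mul_le_mul_of_nonneg_left hhalf.le (sub_nonneg.2 hexp)
    linarith

lemma lt_half_mul_add_log_deltaBS (hv : 0 < v) (r : ℝ) :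
    r < 1 / 2 * (v + 2 / v * Real.log (2 * deltaBS v r + 1)) := by
  have hpos : 0 < 2 * deltaBS v r + 1 := by linarith [deltaBS_pos hv r]
  have hlog : v * (r - v / 2) < Real.log (2 * deltaBS v r + 1) :=
    (Real.lt_log_iff_exp_lt hpos).2 (exp_lt_two_mul_deltaBS_add_one hv r)
  calc r = v / 2 + (r - v / 2) := (add_sub_cancel _ _).symm
    _ < v / 2 + Real.log (2 * deltaBS v r + 1) / v := by
        gcongr
        exact (lt_div_iff₀' hv).2 hlog
    _ = 1 / 2 * (v + 2 / v * Real.log (2 * deltaBS v r + 1)) := by ring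

end Delta

/-- Explicit bounds for the minimizer `r*` (the unique solution of `δ(r*) = a`) in the
Black-Scholes case. -/
theorem bs_rstar_bounds (v a : ℝ) (hv : 0 < v) (ha : 0 < a) :
    (∃! r : ℝ, deltaBS v r = a) ∧
    ∀ r : ℝ, deltaBS v r = a →
      ((a ≤ Real.sqrt (Real.pi / 2) * phi v + Phi v - 1 →
          -Real.sqrt (-2 * Real.log (a / v * Real.sqrt (2 * Real.pi))) < r ∧ r ≤ 0) ∧
       ((Real.sqrt (Real.pi / 2) * phi v + Phi v - 1 < a ∧
          a ≤ 1 / Real.sqrt (2 * Real.pi) * (Phi v / phi v) - 1 / 2) →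
          0 < r ∧ r ≤ v) ∧
       (1 / Real.sqrt (2 * Real.pi) * (Phi v / phi v) - 1 / 2 < a →
          v < r ∧ r < 1 / 2 * (v + 2 / v * Real.log (2 * a + 1)))) := by
  have hmono := strictMono_deltaBS hv
  refine ⟨existsUnique_deltaBS_eq hv ha, ?_⟩
  rintro r rfl
  rw [← deltaBS_zero, ← deltaBS_self, hmono.le_iff_le, hmono.lt_iff_lt, hmono.le_iff_le,
    hmono.lt_iff_lt]
  exact ⟨fun hr ↦ ⟨neg_sqrt_log_deltaBS_lt hv hr, hr⟩, id,
    fun hr ↦ ⟨hr, lt_half_mul_add_log_deltaBS hv r⟩⟩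
end
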